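/- Let d ≥ 2 and m ≥ 2, let Π_1, …, Π_m be parallel hyperplanes in E^{d+1} with Π_j above Π_i for j > i, let P_i ⊂ Π_i be finite sets with each 𝒫_i = conv(P_i) d-dimensional with n_i vertices, and let 𝒫 = conv(P_1 ∪ … ∪ P_m). Assume every nonempty proper exposed face of 𝒫 that is contained neither in Π_1 nor in Π_m is a simplex. Let Π̃ be a hyperplane parallel to the Π_i and lying strictly between Π_{m−1} and Π_m. Then for every 1 ≤ k ≤ d, the number of k-faces F of 𝒫 with F ∩ Π̃ ≠ ∅ is at most Σ_A Π_{i=1}^m C(n_i, α_i), where the sum ranges over all vectors A = (α_1, …, α_m) of natural numbers with 0 ≤ α_i ≤ k for all i, α_m ≥ 1, and α_1 + … + α_m = k + 1, and C(n, α) denotes the binomial coefficient. (Lemma 2.3.) -/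

import Mathlib

/-!
Call `Π` the hyperplane at the intermediate height. A `k`-face `F` meeting `Π` is proper, since `𝒫`
has dimension greater than `k`, and lies in none of the hyperplanes `Π i`. So `F` is a simplex, the
convex hull of its `k + 1` vertices. As `F` reaches `Π` and no generating point lies on `Π`, some
vertex of `F` lies strictly above `Π`, hence in the top layer, and some vertex lies strictly below,
hence in another layer. Every vertex of `F` is a vertex of the hull of a layer containing it;
colouring vertices by such layers, it remains to count the `(k + 1)`-element sets of vertices that
use the top colour but not only the top colour. Sorting them by the number of vertices of each
colour gives the sum of products of binomial coefficients.
-/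

open Set Pointwise RealInnerProductSpace

/-- The dimension of the affine hull of a set. -/
noncomputable def adim {N : ℕ} (F : Set (EuclideanSpace ℝ (Fin N))) : ℕ :=
  Module.finrank ℝ (vectorSpan ℝ F)

/-- A compact convex set is a simplex if its extreme points (vertices) are affinely
independent. -/
def IsSimplexSet {N : ℕ} (F : Set (EuclideanSpace ℝ (Fin N))) : Prop :=
  AffineIndependent ℝ ((↑) : (F.extremePoints ℝ) → EuclideanSpace ℝ (Fin N))

section ColoredSubsets

open scoped Finset

variable {α ι : Type*} [DecidableEq ι]

lemma filter_color_injective (c : α → ι) :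
    Function.Injective fun (V : Finset α) (i : ι) => {v ∈ V | c v = i} := by
  intro V W h
  ext v
  simpa only [Finset.mem_filter, and_true] using Finset.ext_iff.1 (congrFun h (c v)) v

lemma card_filter_color_lt {c : α → ι} {V : Finset α} {l : ι} (hl : ∃ v ∈ V, c v = l)
    (hne : ∃ v ∈ V, c v ≠ l) (i : ι) : #{v ∈ V | c v = i} < #V := by
  refine Finset.card_lt_card (Finset.filter_ssubset.2 ?_)
  obtain rfl | hi := eq_or_ne i l
  · exact hne
  · obtain ⟨v, hv, rfl⟩ := hl
    exact ⟨v, hv, hi.symm⟩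

lemma card_powersetCard_filter_color_le [Fintype ι] (S : Finset α) (c : α → ι) (l : ι) (k : ℕ) :
    #{V ∈ S.powersetCard (k + 1) | (∃ v ∈ V, c v = l) ∧ ∃ v ∈ V, c v ≠ l} ≤
      ∑ A : ι → Fin (k + 1),
        if 1 ≤ (A l : ℕ) ∧ (∑ i, (A i : ℕ)) = k + 1 then
          ∏ i, (#{v ∈ S | c v = i}).choose (A i)
        else 0 := by
  classical
  let types : Finset (ι → Fin (k + 1)) := {A | 1 ≤ (A l : ℕ) ∧ ∑ i, (A i : ℕ) = k + 1}
  let choices (A : ι → Fin (k + 1)) : Finset (ι → Finset α) :=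
    Fintype.piFinset fun i => {v ∈ S | c v = i}.powersetCard (A i)
  calc
    _ ≤ #(types.biUnion choices) := by
      refine Finset.card_le_card_of_injOn (fun V i => {v ∈ V | c v = i}) (fun V hV => ?_)
        (filter_color_injective c).injOn
      obtain ⟨hVS, hl, hne⟩ := Finset.mem_filter.1 hV
      obtain ⟨hsub, hcard⟩ := Finset.mem_powersetCard.1 hVS
      have hlt (i : ι) : #{v ∈ V | c v = i} < k + 1 := hcard ▸ card_filter_color_lt hl hne i
      have hpos : 0 < #{v ∈ V | c v = l} := Finset.card_pos.2 (Finset.filter_nonempty_iff.2 hl)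
      have hsum : ∑ i, #{v ∈ V | c v = i} = k + 1 := by
        rw [← hcard, Finset.card_eq_sum_card_fiberwise fun v _ => Finset.mem_univ (c v)]
      exact Finset.mem_biUnion.2 ⟨fun i => ⟨_, hlt i⟩,
        Finset.mem_filter.2 ⟨Finset.mem_univ _, hpos, hsum⟩,
        Fintype.mem_piFinset.2 fun i =>
          Finset.mem_powersetCard.2 ⟨Finset.filter_subset_filter _ hsub, rfl⟩⟩
    _ ≤ ∑ A ∈ types, #(choices A) := Finset.card_biUnion_le
    _ = _ := by
      simp only [types, choices, Finset.sum_filter, Fintype.card_piFinset,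
        Finset.card_powersetCard]

end ColoredSubsets

section VectorSpan

variable {K E F : Type*} [AddCommGroup E] [AddCommGroup F]

lemma nonempty_of_finrank_vectorSpan_ne_zero [Ring K] [Nontrivial K] [Module K E] {s : Set E}
    (hs : Module.finrank K (vectorSpan K s) ≠ 0) : s.Nonempty := by
  rw [nonempty_iff_ne_empty]
  rintro rfl
  exact hs (by rw [vectorSpan_empty, finrank_bot])

lemma vectorSpan_le_ker [Ring K] [Module K E] [Module K F] {f : E →ₗ[K] F} {s : Set E} {a : F}
    (hs : ∀ x ∈ s, f x = a) : vectorSpan K s ≤ LinearMap.ker f := by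
  rw [vectorSpan_def, Submodule.span_le]
  rintro _ ⟨x, hx, y, hy, rfl⟩
  simp [hs x hx, hs y hy]

variable [DivisionRing K] [Module K E]

lemma finrank_vectorSpan_lt_of_subset [Module K F] {f : E →ₗ[K] F} {s t : Set E} {a : F} {y : E}
    [FiniteDimensional K (vectorSpan K t)] (hst : s ⊆ t) (hne : s.Nonempty)
    (hs : ∀ x ∈ s, f x = a) (hyt : y ∈ t) (hy : f y ≠ a) :
    Module.finrank K (vectorSpan K s) < Module.finrank K (vectorSpan K t) := by
  obtain ⟨x, hx⟩ := hne
  refine Submodule.finrank_lt_finrank_of_lt ((vectorSpan_mono K hst).lt_of_not_ge fun h => hy ?_)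
  have hker : f (y - x) = 0 := vectorSpan_le_ker hs (h (vsub_mem_vectorSpan K hyt (hst hx)))
  rw [← hs x hx, ← sub_eq_zero, ← map_sub, hker]

lemma ncard_eq_finrank_vectorSpan_add_one {V : Set E} (hV : V.Finite) (hne : V.Nonempty)
    (hind : AffineIndependent K ((↑) : V → E)) :
    V.ncard = Module.finrank K (vectorSpan K V) + 1 := by
  have := hV.fintype
  have := hne.to_subtype
  have h := hind.finrank_vectorSpan_add_one
  rw [Subtype.range_coe] at h
  rw [h, ← Nat.card_eq_fintype_card, Nat.card_coe_set_eq]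

end VectorSpan

lemma vectorSpan_convexHull {K E : Type*} [Ring K] [PartialOrder K] [AddCommGroup E]
    [Module K E] (s : Set E) : vectorSpan K (convexHull K s) = vectorSpan K s := by
  rw [← direction_affineSpan, affineSpan_convexHull, direction_affineSpan]

lemma exists_mem_extremePoints_convexHull_of_iUnion {K E ι : Type*} [Field K] [LinearOrder K]
    [IsStrictOrderedRing K] [AddCommGroup E] [Module K E] {P : ι → Set E} {v : E}
    (hv : v ∈ (convexHull K (⋃ i, P i)).extremePoints K) :
    ∃ i, v ∈ (convexHull K (P i)).extremePoints K := by
  obtain ⟨i, hi⟩ := mem_iUnion.1 (extremePoints_convexHull_subset hv)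
  exact ⟨i, inter_extremePoints_subset_extremePoints_of_subset
    (convexHull_mono (subset_iUnion P i)) ⟨subset_convexHull K _ hi, hv⟩⟩

section Faces

variable {E : Type*} [AddCommGroup E] [Module ℝ E] [TopologicalSpace E]

lemma finite_extremePoints_of_isExposed {S F : Set E} (hS : S.Finite)
    (hF : IsExposed ℝ (convexHull ℝ S) F) : (F.extremePoints ℝ).Finite :=
  hS.subset (hF.isExtreme.extremePoints_subset_extremePoints.trans extremePoints_convexHull_subset)

variable [T2Space E] [IsTopologicalAddGroup E] [ContinuousSMul ℝ E] [LocallyConvexSpace ℝ E]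

lemma convexHull_extremePoints_of_finite {C : Set E} (hC : IsCompact C) (hconv : Convex ℝ C)
    (hfin : (C.extremePoints ℝ).Finite) : convexHull ℝ (C.extremePoints ℝ) = C := by
  rw [← (hfin.isClosed_convexHull ℝ).closure_eq, closure_convexHull_extremePoints hC hconv]

lemma convexHull_extremePoints_of_isExposed {S F : Set E} (hS : S.Finite)
    (hF : IsExposed ℝ (convexHull ℝ S) F) : convexHull ℝ (F.extremePoints ℝ) = F :=
  convexHull_extremePoints_of_finite (hF.isCompact (hS.isCompact_convexHull ℝ))
    (hF.convex (convex_convexHull ℝ S)) (finite_extremePoints_of_isExposed hS hF)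

lemma ncard_extremePoints_of_isExposed {S F : Set E} (hS : S.Finite)
    (hF : IsExposed ℝ (convexHull ℝ S) F) (hne : F.Nonempty)
    (hind : AffineIndependent ℝ ((↑) : F.extremePoints ℝ → E)) :
    (F.extremePoints ℝ).ncard = Module.finrank ℝ (vectorSpan ℝ F) + 1 := by
  have hhull := convexHull_extremePoints_of_isExposed hS hF
  have hVne : (F.extremePoints ℝ).Nonempty := convexHull_nonempty_iff.1 (hhull.symm ▸ hne)
  rw [ncard_eq_finrank_vectorSpan_add_one (finite_extremePoints_of_isExposed hS hF) hVne hind,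
    ← vectorSpan_convexHull, hhull]

lemma exists_mem_extremePoints_le_of_isExposed {S F : Set E} {x : E} (hS : S.Finite)
    (hF : IsExposed ℝ (convexHull ℝ S) F) (f : E →ₗ[ℝ] ℝ) (hx : x ∈ F) :
    ∃ v ∈ F.extremePoints ℝ, f x ≤ f v :=
  (f.convexOn convex_univ).exists_ge_of_mem_convexHull (subset_univ _)
    ((convexHull_extremePoints_of_isExposed hS hF).symm ▸ hx)

lemma injOn_extremePoints_of_isExposed {S : Set E} (hS : S.Finite) :
    InjOn (fun F : Set E => F.extremePoints ℝ) {F | IsExposed ℝ (convexHull ℝ S) F} := by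
  intro F hF G hG (h : F.extremePoints ℝ = G.extremePoints ℝ)
  rw [← convexHull_extremePoints_of_isExposed hS hF, h,
    convexHull_extremePoints_of_isExposed hS hG]

lemma ncard_faces_le_of_coloring {ι : Type*} [Fintype ι] [DecidableEq ι] {S : Set E}
    (hS : S.Finite) {𝓕 : Set (Set E)} (h𝓕 : ∀ F ∈ 𝓕, IsExposed ℝ (convexHull ℝ S) F)
    {k : ℕ} (hcard : ∀ F ∈ 𝓕, (F.extremePoints ℝ).ncard = k + 1) (c : E → ι) (l : ι)
    (hl : ∀ F ∈ 𝓕, ∃ v ∈ F.extremePoints ℝ, c v = l)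
    (hne : ∀ F ∈ 𝓕, ∃ v ∈ F.extremePoints ℝ, c v ≠ l) :
    𝓕.ncard ≤ ∑ A : ι → Fin (k + 1),
      if 1 ≤ (A l : ℕ) ∧ (∑ i, (A i : ℕ)) = k + 1 then
        ∏ i, {v ∈ (convexHull ℝ S).extremePoints ℝ | c v = i}.ncard.choose (A i)
      else 0 := by
  classical
  have hfin : ((convexHull ℝ S).extremePoints ℝ).Finite :=
    hS.subset extremePoints_convexHull_subset
  let vertices (F : Set E) : Finset E := {v ∈ hfin.toFinset | v ∈ F}
  have hcoe {F : Set E} (hF : F ∈ 𝓕) : (vertices F : Set E) = F.extremePoints ℝ := by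
    ext v
    simp [vertices, (h𝓕 F hF).isExtreme.extremePoints_eq, and_comm]
  have hmem {F : Set E} (hF : F ∈ 𝓕) (v : E) : v ∈ vertices F ↔ v ∈ F.extremePoints ℝ := by
    rw [← hcoe hF, Finset.mem_coe]
  have hclass (i : ι) : {v ∈ (convexHull ℝ S).extremePoints ℝ | c v = i}.ncard =
      ({v ∈ hfin.toFinset | c v = i} : Finset E).card := by
    rw [← ncard_coe_finset, Finset.coe_filter]
    simp only [hfin.mem_toFinset]
  simp only [hclass]
  refine le_trans ?_ (card_powersetCard_filter_color_le hfin.toFinset c l k)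
  rw [← ncard_coe_finset]
  refine ncard_le_ncard_of_injOn vertices (fun F hF => ?_) (fun F hF G hG h => ?_)
    (Finset.finite_toSet _)
  · have hcard' : (vertices F).card = k + 1 := by
      rw [← hcard F hF, ← hcoe hF, ncard_coe_finset]
    simp only [Finset.coe_filter, Finset.mem_powersetCard, mem_ofPred_eq, hmem hF]
    exact ⟨⟨Finset.filter_subset _ _, hcard'⟩, hl F hF, hne F hF⟩
  · refine injOn_extremePoints_of_isExposed hS (h𝓕 F hF) (h𝓕 G hG) ?_
    simp only [← hcoe hF, ← hcoe hG, h]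

theorem stmt3_general {ι : Type*} [Fintype ι] [DecidableEq ι] {P : ι → Set E}
    (hfin : ∀ i, (P i).Finite) (f : E →ₗ[ℝ] ℝ) (s : ℝ) (l : ι)
    (habove : ∀ x ∈ P l, s < f x) (hbelow : ∀ i, i ≠ l → ∀ x ∈ P i, f x < s) (k : ℕ)
    (hsimp : ∀ F : Set E, IsExposed ℝ (convexHull ℝ (⋃ i, P i)) F →
      Module.finrank ℝ (vectorSpan ℝ F) = k → (F ∩ {x | f x = s}).Nonempty →
      AffineIndependent ℝ ((↑) : F.extremePoints ℝ → E)) :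
    {F : Set E | IsExposed ℝ (convexHull ℝ (⋃ i, P i)) F ∧ F.Nonempty ∧
        Module.finrank ℝ (vectorSpan ℝ F) = k ∧ (F ∩ {x | f x = s}).Nonempty}.ncard ≤
      ∑ A : ι → Fin (k + 1),
        if 1 ≤ (A l : ℕ) ∧ (∑ i, (A i : ℕ)) = k + 1 then
          ∏ i, Nat.choose (((convexHull ℝ (P i)).extremePoints ℝ).ncard) (A i)
        else 0 := by
  have : Nonempty ι := ⟨l⟩
  choose! c hc using fun v (hv : v ∈ (convexHull ℝ (⋃ i, P i)).extremePoints ℝ) =>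
    exists_mem_extremePoints_convexHull_of_iUnion hv
  have hclass (i : ι) : {v ∈ (convexHull ℝ (⋃ i, P i)).extremePoints ℝ | c v = i}.ncard
      ≤ ((convexHull ℝ (P i)).extremePoints ℝ).ncard := by
    refine ncard_le_ncard ?_ ((hfin i).subset extremePoints_convexHull_subset)
    rintro v ⟨hv, rfl⟩
    exact hc v hv
  have hcP {F : Set E} (hF : IsExposed ℝ (convexHull ℝ (⋃ i, P i)) F) {v : E}
      (hv : v ∈ F.extremePoints ℝ) : v ∈ P (c v) :=
    extremePoints_convexHull_subset (hc v (hF.isExtreme.extremePoints_subset_extremePoints hv))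
  have hS : (⋃ i, P i).Finite := finite_iUnion hfin
  refine (ncard_faces_le_of_coloring hS (fun F hF => hF.1) (k := k) ?_ c l ?_ ?_).trans ?_
  · rintro F ⟨hF, hne, hdim, hx⟩
    rw [ncard_extremePoints_of_isExposed hS hF hne (hsimp F hF hdim hx), hdim]
  · rintro F ⟨hF, -, -, x, hxF, hxs : f x = s⟩
    obtain ⟨v, hv, hxv⟩ := exists_mem_extremePoints_le_of_isExposed hS hF f hxF
    refine ⟨v, hv, by_contra fun hne => ?_⟩
    linarith [hbelow _ hne v (hcP hF hv)]
  · rintro F ⟨hF, -, -, x, hxF, hxs : f x = s⟩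
    obtain ⟨v, hv, hxv⟩ := exists_mem_extremePoints_le_of_isExposed hS hF (-f) hxF
    rw [LinearMap.neg_apply, LinearMap.neg_apply] at hxv
    refine ⟨v, hv, fun heq => ?_⟩
    linarith [habove v (heq ▸ hcP hF hv)]
  · gcongr with A _
    split_ifs
    · exact Finset.prod_le_prod' fun i _ => Nat.choose_le_choose _ (hclass i)
    · rfl

end Faces

theorem stmt3 (d m : ℕ) (hd : 2 ≤ d) (hm : 2 ≤ m)
    (u : EuclideanSpace ℝ (Fin (d + 1))) (hu : ‖u‖ = 1)
    (t : Fin m → ℝ) (ht : StrictMono t)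
    (P : Fin m → Set (EuclideanSpace ℝ (Fin (d + 1))))
    (hfin : ∀ i, (P i).Finite)
    (hsub : ∀ i, P i ⊆ {x | ⟪x, u⟫ = t i})
    (hdim : ∀ i, adim (convexHull ℝ (P i)) = d)
    -- every nonempty proper exposed face of 𝒫 contained neither in Π₁ nor in Π_m is a simplex
    (hsimp : ∀ F : Set (EuclideanSpace ℝ (Fin (d + 1))),
      IsExposed ℝ (convexHull ℝ (⋃ i, P i)) F → F.Nonempty →
      F ≠ convexHull ℝ (⋃ i, P i) →
      ¬ F ⊆ {x | ⟪x, u⟫ = t ⟨0, by omega⟩} →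
      ¬ F ⊆ {x | ⟪x, u⟫ = t ⟨m - 1, by omega⟩} →
      IsSimplexSet F)
    (ttil : ℝ) (htt1 : t ⟨m - 2, by omega⟩ < ttil) (htt2 : ttil < t ⟨m - 1, by omega⟩) :
    ∀ k, 1 ≤ k → k ≤ d →
      {F : Set (EuclideanSpace ℝ (Fin (d + 1))) |
          IsExposed ℝ (convexHull ℝ (⋃ i, P i)) F ∧ F.Nonempty ∧ adim F = k ∧
          (F ∩ {x | ⟪x, u⟫ = ttil}).Nonempty}.ncard ≤
        ∑ A : Fin m → Fin (k + 1),
          if 1 ≤ (A ⟨m - 1, by omega⟩ : ℕ) ∧ (∑ i, (A i : ℕ)) = k + 1 then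
            ∏ i, Nat.choose (((convexHull ℝ (P i)).extremePoints ℝ).ncard) (A i)
          else 0 := by
  intro k _ hkd
  let f : EuclideanSpace ℝ (Fin (d + 1)) →ₗ[ℝ] ℝ := (innerₗ _).flip u
  have hne (i : Fin m) : (P i).Nonempty := convexHull_nonempty_iff.1 <|
    nonempty_of_finrank_vectorSpan_ne_zero ((hdim i).trans_ne (by omega))
  have hbelow (i : Fin m) (hi : i ≠ ⟨m - 1, by omega⟩) : t i < ttil := by
    have hi' : (i : ℕ) ≠ m - 1 := Fin.val_ne_of_ne hi
    exact (ht.monotone (Fin.le_def.2 (by dsimp only; omega))).trans_lt htt1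
  have hbottom : t ⟨0, by omega⟩ < ttil := hbelow _ (Fin.ne_of_val_ne (by dsimp only; omega))
  have hdim_lt : d < adim (convexHull ℝ (⋃ i, P i)) := by
    obtain ⟨y, hy⟩ := hne ⟨m - 1, by omega⟩
    refine (hdim ⟨0, by omega⟩).symm.trans_lt ?_
    rw [adim, adim, vectorSpan_convexHull, vectorSpan_convexHull]
    exact finrank_vectorSpan_lt_of_subset (f := f) (subset_iUnion P _) (hne _) (hsub _)
      (mem_iUnion_of_mem _ hy) ((hsub _ hy).trans_ne (hbottom.trans htt2).ne')
  refine stmt3_general hfin f ttil _ (fun x hx => htt2.trans_eq (hsub _ hx).symm)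
    (fun i hi x hx => (hsub i hx).trans_lt (hbelow i hi)) k ?_
  rintro F hF hFk ⟨x, hxF, hx : ⟪x, u⟫ = ttil⟩
  refine hsimp F hF ⟨x, hxF⟩ ?_ (fun h => hbottom.ne ((h hxF).symm.trans hx))
    (fun h => htt2.ne (hx.symm.trans (h hxF)))
  rintro rfl
  exact (hkd.trans_lt hdim_lt).ne' hFk
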